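/- For a ∈ (0,1) and even integer p ≠ 0, ∫₀^∞ sin(ax)J_p(x)/x dx = (1/p)sin(p arcsin(a)); and ∫₀^∞ sin(ax)J_0(x)/x dx = arcsin(a). -/

import Mathlib

open Real

noncomputable section

/-- The Bessel function of the first kind of integer order `p`,
`J_p(x) = (1/π) ∫₀^π cos(pt - x sin t) dt`. -/
def besselJ (p : ℤ) (x : ℝ) : ℝ :=
  (1 / π) * ∫ t in (0 : ℝ)..π, Real.cos (p * t - x * Real.sin t)

open MeasureTheory Set Filter Topology intervalIntegral

def sinInt (R : ℝ) : ℝ := ∫ x in (0 : ℝ)..R, Real.sinc x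

lemma sinInt_neg (R : ℝ) : sinInt (-R) = - sinInt R := by
  unfold sinInt
  have h := intervalIntegral.integral_comp_neg (a := 0) (b := R) (fun x => Real.sinc x)
  simp only [Real.sinc_neg, neg_zero] at h
  rw [h, intervalIntegral.integral_symm]

lemma continuous_sinInt : Continuous sinInt :=
  intervalIntegral.continuous_primitive
    (fun a b => Real.continuous_sinc.intervalIntegrable a b) 0

lemma dirichlet_inner (R y : ℝ) :
    ∫ x in (0 : ℝ)..R, Real.sin x * Real.exp (-x * y) =
      (1 + y ^ 2)⁻¹ - Real.exp (-R * y) * (Real.cos R + y * Real.sin R) / (1 + y ^ 2) := by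
  have hy : (1 + y ^ 2) ≠ 0 := by positivity
  have key : ∀ x ∈ uIcc 0 R, HasDerivAt
      (fun x => -(Real.exp (-x * y) * (Real.cos x + y * Real.sin x) / (1 + y ^ 2)))
      (Real.sin x * Real.exp (-x * y)) x := by
    intro x _
    have h1 : HasDerivAt (fun x : ℝ => Real.exp (-x * y)) (Real.exp (-x * y) * (-1 * y)) x :=
      (((hasDerivAt_id x).neg).mul_const y).exp
    have h2 : HasDerivAt (fun x : ℝ => Real.cos x + y * Real.sin x)
        (-Real.sin x + y * Real.cos x) x :=
      (Real.hasDerivAt_cos x).add ((Real.hasDerivAt_sin x).const_mul y)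
    refine ((h1.mul h2).div_const (1 + y ^ 2)).neg.congr_deriv ?_
    field_simp
    ring
  rw [intervalIntegral.integral_eq_sub_of_hasDerivAt key
    ((by fun_prop : Continuous fun x => Real.sin x * Real.exp (-x * y)).intervalIntegrable _ _)]
  simp
  ring

lemma dirichlet_tail_bound (R y : ℝ) (hy : 0 < y) :
    ‖Real.exp (-R * y) * (Real.cos R + y * Real.sin R) / (1 + y ^ 2)‖ ≤
      2 * Real.exp (-R * y) := by
  have hy2 : 0 < 1 + y ^ 2 := by positivity
  rw [norm_div, norm_mul, Real.norm_of_nonneg (Real.exp_pos _).le, Real.norm_of_nonneg hy2.le,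
    div_le_iff₀ hy2]
  have h : ‖Real.cos R + y * Real.sin R‖ ≤ 1 + y := by
    rw [Real.norm_eq_abs]
    calc _ ≤ |Real.cos R| + |y * Real.sin R| := abs_add_le _ _
      _ ≤ 1 + y * 1 := by
        rw [abs_mul, abs_of_pos hy]
        gcongr
        · exact Real.abs_cos_le_one R
        · exact Real.abs_sin_le_one R
      _ = 1 + y := by ring
  have h2 : 1 + y ≤ 2 * (1 + y ^ 2) := by nlinarith [sq_nonneg (y - 1)]
  calc _ ≤ Real.exp (-R * y) * (2 * (1 + y ^ 2)) := by
        gcongr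
        exact h.trans h2
    _ = _ := by ring

lemma sinInt_eq (R : ℝ) (hR : 0 < R) :
    sinInt R = π / 2 -
      ∫ y in Ioi (0 : ℝ), Real.exp (-R * y) * (Real.cos R + y * Real.sin R) / (1 + y ^ 2) := by
  have inner : ∀ x : ℝ, 0 < x → ∫ y in Ioi (0:ℝ), Real.exp (-x * y) = 1 / x := by
    intro x hx
    rw [integral_exp_mul_Ioi (by linarith)]
    simp
  have hint : Integrable (Function.uncurry fun x y : ℝ => Real.sin x * Real.exp (-x * y))
      ((volume.restrict (Set.uIoc 0 R)).prod (volume.restrict (Ioi 0))) := by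
    rw [integrable_prod_iff]
    · constructor
      · filter_upwards [ae_restrict_mem measurableSet_uIoc] with x hx
        rw [uIoc_of_le hR.le] at hx
        have hx0 : -x < 0 := by linarith [hx.1]
        exact (integrableOn_exp_mul_Ioi hx0 0).const_mul (Real.sin x)
      · have h1 : IntegrableOn (fun x => |Real.sinc x|) (Set.uIoc 0 R) :=
          (Real.continuous_sinc.abs.intervalIntegrable 0 R).def'
        refine Integrable.congr h1 ?_
        filter_upwards [ae_restrict_mem measurableSet_uIoc] with x hx
        rw [uIoc_of_le hR.le] at hx
        simp only [Function.uncurry, norm_mul, Real.norm_eq_abs, Real.abs_exp]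
        rw [MeasureTheory.integral_const_mul, inner x hx.1, Real.sinc_of_ne_zero hx.1.ne', abs_div,
          abs_of_pos hx.1]
        ring
    · exact (by fun_prop : Continuous (Function.uncurry fun x y : ℝ =>
        Real.sin x * Real.exp (-x * y))).aestronglyMeasurable
  have swap := MeasureTheory.intervalIntegral_integral_swap hint
  have lhs : ∫ x in (0:ℝ)..R, ∫ y in Ioi (0:ℝ), Real.sin x * Real.exp (-x * y) = sinInt R := by
    unfold sinInt
    refine intervalIntegral.integral_congr_ae (Eventually.of_forall fun x hx => ?_)
    rw [uIoc_of_le hR.le] at hx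
    rw [MeasureTheory.integral_const_mul, inner x hx.1, Real.sinc_of_ne_zero hx.1.ne']
    ring
  rw [← lhs, swap]
  simp_rw [dirichlet_inner]
  rw [MeasureTheory.integral_sub integrable_inv_one_add_sq.integrableOn]
  · rw [integral_Ioi_inv_one_add_sq]
    simp
  · refine Integrable.mono' ((integrableOn_exp_mul_Ioi (a := -R) (by linarith) 0).const_mul 2) ?_ ?_
    · have : Continuous fun y : ℝ =>
          Real.exp (-R * y) * (Real.cos R + y * Real.sin R) / (1 + y ^ 2) := by
        refine Continuous.div (by fun_prop) (by fun_prop) (fun y => by positivity)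
      exact this.aestronglyMeasurable
    · filter_upwards [ae_restrict_mem measurableSet_Ioi] with y hy
      exact dirichlet_tail_bound R y hy

lemma sinInt_sub_le (R : ℝ) (hR : 0 < R) : |sinInt R - π / 2| ≤ 2 / R := by
  rw [sinInt_eq R hR]
  have : ‖∫ y in Ioi (0 : ℝ), Real.exp (-R * y) * (Real.cos R + y * Real.sin R) / (1 + y ^ 2)‖
      ≤ ∫ y in Ioi (0:ℝ), 2 * Real.exp (-R * y) := by
    refine norm_integral_le_of_norm_le
      ((integrableOn_exp_mul_Ioi (a := -R) (by linarith) 0).const_mul 2) ?_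
    filter_upwards [ae_restrict_mem measurableSet_Ioi] with y hy
    exact dirichlet_tail_bound R y hy
  rw [MeasureTheory.integral_const_mul, integral_exp_mul_Ioi (by linarith)] at this
  rw [sub_sub_cancel_left, abs_neg]
  refine this.trans (le_of_eq ?_)
  simp
  ring

lemma tendsto_sinInt : Tendsto sinInt atTop (𝓝 (π / 2)) := by
  rw [tendsto_iff_norm_sub_tendsto_zero]
  refine squeeze_zero' (g := fun R : ℝ => 2 / R) (Eventually.of_forall fun _ => norm_nonneg _) ?_
    (tendsto_const_nhds.div_atTop tendsto_id)
  filter_upwards [eventually_gt_atTop 0] with R hR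
  exact sinInt_sub_le R hR

lemma tendsto_sinInt_atBot : Tendsto sinInt atBot (𝓝 (-(π / 2))) := by
  have := (tendsto_sinInt.comp tendsto_neg_atBot_atTop).neg
  refine this.congr fun x => ?_
  simp [sinInt_neg]

lemma sinInt_bound_pos (R : ℝ) (hR : 0 ≤ R) : |sinInt R| ≤ 4 := by
  rcases le_total R 1 with h | h
  · have := intervalIntegral.norm_integral_le_of_norm_le_const (a := 0) (b := R) (C := 1)
      (f := Real.sinc) (fun x _ => Real.abs_sinc_le_one x)
    rw [sub_zero, abs_of_nonneg hR] at this
    change |sinInt R| ≤ _ at this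
    linarith
  · have h1 := sinInt_sub_le R (by linarith)
    have h2 : 2 / R ≤ 2 := by
      rw [div_le_iff₀ (by linarith)]; linarith
    have := Real.pi_lt_four
    have := Real.pi_pos
    rw [abs_le] at *
    constructor <;> linarith

lemma sinInt_bound (R : ℝ) : |sinInt R| ≤ 4 := by
  rcases le_total 0 R with h | h
  · exact sinInt_bound_pos R h
  · have := sinInt_bound_pos (-R) (by linarith)
    rwa [sinInt_neg, abs_neg] at this

lemma halfJ_eq (p : ℤ) (hp : Even p) (x : ℝ) :
    besselJ p x = (2 / π) * ∫ t in (0 : ℝ)..(π / 2), Real.cos (p * t) * Real.cos (x * Real.sin t) := by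
  unfold besselJ
  have hc : Continuous fun t : ℝ => Real.cos (p * t - x * Real.sin t) := by fun_prop
  have h1 : ∫ t in (π / 2)..π, Real.cos (p * t - x * Real.sin t) =
      ∫ t in (0:ℝ)..(π / 2), Real.cos (p * t + x * Real.sin t) := by
    have h := intervalIntegral.integral_comp_sub_left (a := 0) (b := π / 2)
      (fun t => Real.cos (p * t - x * Real.sin t)) π
    rw [sub_zero, sub_half] at h
    rw [← h]
    refine intervalIntegral.integral_congr fun t _ => ?_
    obtain ⟨k, rfl⟩ := hp
    simp only [Real.sin_pi_sub]
    rw [← Real.cos_neg, ← Real.cos_add_int_mul_two_pi _ k]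
    congr 1
    push_cast
    ring
  rw [← intervalIntegral.integral_add_adjacent_intervals (hc.intervalIntegrable 0 (π / 2))
    (hc.intervalIntegrable (π / 2) π), h1, ← intervalIntegral.integral_add
      (hc.intervalIntegrable _ _) ((by fun_prop : Continuous fun t : ℝ =>
        Real.cos (p * t + x * Real.sin t)).intervalIntegrable _ _)]
  have : ∀ t : ℝ, Real.cos (p * t - x * Real.sin t) + Real.cos (p * t + x * Real.sin t) =
      2 * (Real.cos (p * t) * Real.cos (x * Real.sin t)) := by
    intro t
    rw [Real.cos_sub, Real.cos_add]; ring
  simp_rw [this]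
  rw [intervalIntegral.integral_const_mul]
  ring

lemma half_decay (p x δ : ℝ) (hδ : 0 < δ) (hδ1 : δ ≤ 1) (hx : δ ^ 3 * x = 1) :
    |∫ t in (0 : ℝ)..(π / 2), Real.cos (p * t) * Real.cos (x * Real.sin t)| ≤
      (13 + 8 * |p|) * δ := by
  have hx0 : 0 < x := by
    by_contra h
    have : δ ^ 3 * x ≤ 0 := mul_nonpos_of_nonneg_of_nonpos (by positivity) (not_lt.1 h)
    linarith
  have hpi3 := Real.pi_gt_three
  have hpi4 := Real.pi_lt_four
  set b := π / 2 - δ with hb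
  have hb0 : 0 ≤ b := by linarith
  have hb2 : b ≤ 2 := by linarith
  have hcont : Continuous fun t : ℝ => Real.cos (p * t) * Real.cos (x * Real.sin t) := by fun_prop
  have hcos : ∀ t ∈ Icc 0 b, δ / 2 ≤ Real.cos t := by
    intro t ht
    have h1 : Real.cos b ≤ Real.cos t :=
      Real.cos_le_cos_of_nonneg_of_le_pi ht.1 (by linarith) ht.2
    have h2 : Real.cos b = Real.sin δ := Real.cos_pi_div_two_sub δ
    have h3 := Real.mul_le_sin hδ.le (by linarith)
    have h4 : δ / 2 ≤ 2 / π * δ := by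
      rw [div_mul_eq_mul_div, div_le_div_iff₀ (by norm_num) Real.pi_pos]
      nlinarith
    linarith
  have hcpos : ∀ t ∈ Icc 0 b, 0 < Real.cos t := fun t ht => by
    have := hcos t ht; linarith
  let G : ℝ → ℝ := fun t => Real.cos (p * t) / Real.cos t * (Real.sin (x * Real.sin t) / x)
  let H : ℝ → ℝ := fun t => (-(Real.sin (p * t) * p) * Real.cos t + Real.cos (p * t) * Real.sin t) /
      Real.cos t ^ 2 * (Real.sin (x * Real.sin t) / x)
  have hder : ∀ t ∈ uIcc 0 b, HasDerivAt G
      (H t + Real.cos (p * t) * Real.cos (x * Real.sin t)) t := by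
    intro t ht
    rw [uIcc_of_le hb0] at ht
    have hct := (hcpos t ht).ne'
    have h1 : HasDerivAt (fun t : ℝ => Real.cos (p * t)) (-Real.sin (p * t) * (p * 1)) t :=
      ((hasDerivAt_id t).const_mul p).cos
    have h2 : HasDerivAt (fun t : ℝ => Real.sin (x * Real.sin t))
        (Real.cos (x * Real.sin t) * (x * Real.cos t)) t :=
      ((Real.hasDerivAt_sin t).const_mul x).sin
    refine ((h1.div (Real.hasDerivAt_cos t) hct).mul (h2.div_const x)).congr_deriv ?_
    simp only [H, Pi.div_apply]
    field_simp
    ring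
  have hHc : ContinuousOn H (uIcc 0 b) := by
    rw [uIcc_of_le hb0]
    refine ContinuousOn.mul (ContinuousOn.div (by fun_prop) (by fun_prop) ?_) (by fun_prop)
    intro t ht
    exact pow_ne_zero _ (hcpos t ht).ne'
  have hHi : IntervalIntegrable H volume 0 b := hHc.intervalIntegrable
  have hft := intervalIntegral.integral_eq_sub_of_hasDerivAt hder
    (hHi.add (hcont.intervalIntegrable 0 b))
  rw [intervalIntegral.integral_add hHi (hcont.intervalIntegrable 0 b)] at hft
  have hG0 : G 0 = 0 := by simp [G]
  have hxi : 1 / x = δ ^ 3 := by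
    rw [div_eq_iff hx0.ne']; exact hx.symm
  have hsx : ∀ t, |Real.sin (x * Real.sin t) / x| ≤ δ ^ 3 := by
    intro t
    rw [abs_div, abs_of_pos hx0, ← hxi]
    gcongr
    exact Real.abs_sin_le_one _
  have hGb : |G b| ≤ 4 * δ := by
    have hc := hcos b ⟨hb0, le_rfl⟩
    simp only [G]
    rw [abs_mul, abs_div, abs_of_pos (hcpos b ⟨hb0, le_rfl⟩)]
    have h1 : |Real.cos (p * b)| / Real.cos b ≤ 1 / (δ / 2) := by
      gcongr
      exact Real.abs_cos_le_one _
    calc _ ≤ 1 / (δ / 2) * δ ^ 3 := by gcongr; exact hsx b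
      _ = 2 * δ * δ := by field_simp
      _ ≤ 4 * δ := by nlinarith
  have hHb : ∀ t ∈ Set.uIoc (0:ℝ) b, ‖H t‖ ≤ 4 * (|p| + 1) * δ := by
    intro t ht
    rw [uIoc_of_le hb0] at ht
    have ht' : t ∈ Icc 0 b := ⟨ht.1.le, ht.2⟩
    have hc := hcos t ht'
    simp only [H]
    rw [Real.norm_eq_abs, abs_mul, abs_div, abs_pow, abs_of_pos (hcpos t ht')]
    have hnum : |-(Real.sin (p * t) * p) * Real.cos t + Real.cos (p * t) * Real.sin t| ≤ |p| + 1 := by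
      calc _ ≤ |-(Real.sin (p * t) * p) * Real.cos t| + |Real.cos (p * t) * Real.sin t| :=
            abs_add_le _ _
        _ = |Real.sin (p * t)| * |p| * |Real.cos t| + |Real.cos (p * t)| * |Real.sin t| := by
            simp [abs_mul]
        _ ≤ 1 * |p| * 1 + 1 * 1 := by
            gcongr <;> first | exact Real.abs_sin_le_one _ | exact Real.abs_cos_le_one _
        _ = _ := by ring
    have h1 : |-(Real.sin (p * t) * p) * Real.cos t + Real.cos (p * t) * Real.sin t| /
        Real.cos t ^ 2 ≤ (|p| + 1) / (δ / 2) ^ 2 := by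
      gcongr
    calc _ ≤ (|p| + 1) / (δ / 2) ^ 2 * δ ^ 3 := by gcongr; exact hsx t
      _ = 4 * (|p| + 1) * δ := by field_simp; norm_num
  have hHint := intervalIntegral.norm_integral_le_of_norm_le_const hHb
  rw [sub_zero, abs_of_nonneg hb0, Real.norm_eq_abs] at hHint
  have hHint2 : |∫ t in (0:ℝ)..b, H t| ≤ 8 * (|p| + 1) * δ := by
    have : 0 ≤ 4 * (|p| + 1) * δ := by positivity
    nlinarith
  have hlast := intervalIntegral.norm_integral_le_of_norm_le_const (a := b) (b := π / 2) (C := 1)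
    (f := fun t : ℝ => Real.cos (p * t) * Real.cos (x * Real.sin t)) (fun t _ => by
      rw [norm_mul]
      exact mul_le_one₀ (Real.abs_cos_le_one _) (norm_nonneg _) (Real.abs_cos_le_one _))
  have hbd : |π / 2 - b| = δ := by
    rw [hb, sub_sub_cancel, abs_of_pos hδ]
  rw [hbd, Real.norm_eq_abs, one_mul] at hlast
  rw [← intervalIntegral.integral_add_adjacent_intervals (hcont.intervalIntegrable 0 b)
    (hcont.intervalIntegrable b (π / 2))]
  have e : ∫ t in (0:ℝ)..b, Real.cos (p * t) * Real.cos (x * Real.sin t) =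
      G b - ∫ t in (0:ℝ)..b, H t := by
    linarith
  rw [e]
  rw [abs_le] at *
  constructor <;> linarith

/-- continuous version of `sin (a x) cos (x s) / x` -/
def kern (a s x : ℝ) : ℝ :=
  ((a + s) * Real.sinc ((a + s) * x) + (a - s) * Real.sinc ((a - s) * x)) / 2

lemma mul_sinc_mul (c x : ℝ) (hx : x ≠ 0) : c * Real.sinc (c * x) = Real.sin (c * x) / x := by
  rcases eq_or_ne c 0 with rfl | hc
  · simp
  · rw [Real.sinc_of_ne_zero (mul_ne_zero hc hx)]
    field_simp

lemma kern_eq (a s x : ℝ) (hx : x ≠ 0) :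
    kern a s x = Real.sin (a * x) * Real.cos (x * s) / x := by
  unfold kern
  rw [mul_sinc_mul _ _ hx, mul_sinc_mul _ _ hx, add_mul, sub_mul, Real.sin_add, Real.sin_sub,
    mul_comm x s]
  ring

lemma integral_kern (a s R : ℝ) :
    ∫ x in (0:ℝ)..R, kern a s x = (sinInt ((a + s) * R) + sinInt ((a - s) * R)) / 2 := by
  have hs := Real.continuous_sinc
  have h : ∀ c : ℝ, ∫ x in (0:ℝ)..R, c * Real.sinc (c * x) = sinInt (c * R) := by
    intro c
    rw [intervalIntegral.integral_const_mul, intervalIntegral.mul_integral_comp_mul_left]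
    simp [sinInt]
  have hi : ∀ c : ℝ, IntervalIntegrable (fun x => c * Real.sinc (c * x)) volume 0 R := fun c =>
    (by fun_prop : Continuous fun x => c * Real.sinc (c * x)).intervalIntegrable _ _
  unfold kern
  rw [intervalIntegral.integral_div, intervalIntegral.integral_add (hi _) (hi _), h, h]

/-- the continuous extension of the integrand -/
def integrandC (a : ℝ) (p : ℤ) (x : ℝ) : ℝ :=
  (2 / π) * ∫ t in (0 : ℝ)..(π / 2), Real.cos (p * t) * kern a (Real.sin t) x

lemma continuous_kern2 (a : ℝ) (p : ℤ) :
    Continuous (Function.uncurry fun x t : ℝ => Real.cos (p * t) * kern a (Real.sin t) x) := by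
  have hs := Real.continuous_sinc
  unfold kern Function.uncurry
  fun_prop

lemma continuous_integrandC (a : ℝ) (p : ℤ) : Continuous (integrandC a p) := by
  unfold integrandC
  exact continuous_const.mul
    (intervalIntegral.continuous_parametric_intervalIntegral_of_continuous'
      (continuous_kern2 a p) 0 (π / 2))

lemma integrandC_eq (a : ℝ) (p : ℤ) (hp : Even p) (x : ℝ) (hx : x ≠ 0) :
    Real.sin (a * x) * besselJ p x / x = integrandC a p x := by
  unfold integrandC
  rw [halfJ_eq p hp]
  have : ∀ t : ℝ, Real.cos (p * t) * kern a (Real.sin t) x =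
      (Real.sin (a * x) / x) * (Real.cos (p * t) * Real.cos (x * Real.sin t)) := by
    intro t
    rw [kern_eq _ _ _ hx]; ring
  simp_rw [this]
  rw [intervalIntegral.integral_const_mul]
  ring

lemma integrable_integrandC (a : ℝ) (p : ℤ) (hp : Even p) :
    IntegrableOn (integrandC a p) (Ioi 0) := by
  rw [← Ioc_union_Ioi_eq_Ioi (zero_le_one (α := ℝ))]
  refine IntegrableOn.union ?_ ?_
  · exact ((continuous_integrandC a p).intervalIntegrable 0 1).1
  · have hr : IntegrableOn (fun x : ℝ => x ^ (-4 / 3 : ℝ)) (Ioi 1) :=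
      integrableOn_Ioi_rpow_of_lt (by norm_num) one_pos
    refine Integrable.mono' (hr.const_mul (2 / π * (13 + 8 * |(p:ℝ)|)))
      (continuous_integrandC a p).aestronglyMeasurable ?_
    filter_upwards [ae_restrict_mem measurableSet_Ioi] with x hx
    have hx1 : (1:ℝ) < x := hx
    have hx0 : 0 < x := by linarith
    rw [← integrandC_eq a p hp x hx0.ne', halfJ_eq p hp]
    have hd := half_decay p x (x ^ (-1 / 3 : ℝ)) (Real.rpow_pos_of_pos hx0 _)
      (Real.rpow_le_one_of_one_le_of_nonpos hx1.le (by norm_num)) (by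
        rw [← Real.rpow_natCast, ← Real.rpow_mul hx0.le]
        norm_num
        rw [Real.rpow_neg_one, inv_mul_cancel₀ hx0.ne'])
    have hpw : x ^ (-4 / 3 : ℝ) = x ^ (-1 / 3 : ℝ) / x := by
      rw [← Real.rpow_sub_one hx0.ne']; norm_num
    rw [hpw, Real.norm_eq_abs, abs_div, abs_mul, abs_mul, abs_of_pos hx0,
      abs_of_pos (by positivity : 0 < 2 / π), mul_div_assoc', mul_assoc (2 / π)]
    refine div_le_div_of_nonneg_right ?_ hx0.le
    calc _ ≤ 1 * (2 / π * ((13 + 8 * |(p:ℝ)|) * x ^ (-1 / 3 : ℝ))) := by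
          gcongr
          exact Real.abs_sin_le_one _
      _ = _ := one_mul _

lemma partial_integral (a : ℝ) (p : ℤ) (R : ℝ) :
    ∫ x in (0:ℝ)..R, integrandC a p x = (2 / π) * ∫ t in (0 : ℝ)..(π / 2), Real.cos (p * t) *
      ((sinInt ((a + Real.sin t) * R) + sinInt ((a - Real.sin t) * R)) / 2) := by
  unfold integrandC
  rw [intervalIntegral.integral_const_mul, MeasureTheory.intervalIntegral_intervalIntegral_swap]
  · simp_rw [intervalIntegral.integral_const_mul, integral_kern]
  · refine IntegrableOn.mono_set (t := uIcc 0 R ×ˢ uIcc 0 (π / 2)) ?_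
      (prod_mono uIoc_subset_uIcc uIoc_subset_uIcc)
    exact (continuous_kern2 a p).continuousOn.integrableOn_compact
      (isCompact_uIcc.prod isCompact_uIcc)

lemma main_integral (a : ℝ) (ha0 : 0 < a) (ha1 : a < 1) (p : ℤ) (hp : Even p) :
    ∫ x in Ioi (0:ℝ), Real.sin (a * x) * besselJ p x / x =
      ∫ t in (0:ℝ)..(Real.arcsin a), Real.cos (p * t) := by
  have hal0 : 0 < Real.arcsin a := Real.arcsin_pos.2 ha0
  have hal1 : Real.arcsin a < π / 2 := Real.arcsin_lt_pi_div_two.2 ha1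
  have e1 : ∫ x in Ioi (0:ℝ), Real.sin (a * x) * besselJ p x / x =
      ∫ x in Ioi (0:ℝ), integrandC a p x := by
    refine setIntegral_congr_fun measurableSet_Ioi fun x hx => ?_
    exact integrandC_eq a p hp x (ne_of_gt hx)
  rw [e1]
  refine tendsto_nhds_unique
    (intervalIntegral_tendsto_integral_Ioi 0 (integrable_integrandC a p hp) tendsto_id) ?_
  simp only [id, partial_integral]
  have e2 : ∫ t in (0:ℝ)..(Real.arcsin a), Real.cos (p * t) = (2 / π) *
      ∫ t in (0:ℝ)..(π / 2), indicator {t | t ≤ Real.arcsin a}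
        (fun t => Real.cos (p * t) * (π / 2)) t := by
    rw [intervalIntegral.integral_indicator ⟨hal0.le, hal1.le⟩,
      intervalIntegral.integral_mul_const]
    field_simp
  rw [e2]
  refine Tendsto.const_mul _ ?_
  have hS := continuous_sinInt
  refine intervalIntegral.tendsto_integral_filter_of_dominated_convergence (fun _ => 4) ?_ ?_
    intervalIntegrable_const ?_
  · refine Eventually.of_forall fun R => Continuous.aestronglyMeasurable ?_
    fun_prop
  · refine Eventually.of_forall fun R => Eventually.of_forall fun t _ => ?_
    rw [norm_mul, Real.norm_eq_abs, Real.norm_eq_abs]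
    have h1 := sinInt_bound ((a + Real.sin t) * R)
    have h2 := sinInt_bound ((a - Real.sin t) * R)
    have h3 : |(sinInt ((a + Real.sin t) * R) + sinInt ((a - Real.sin t) * R)) / 2| ≤ 4 := by
      rw [abs_le] at *
      constructor <;> linarith
    calc _ ≤ 1 * (4:ℝ) := by
          gcongr
          exact Real.abs_cos_le_one _
      _ = 4 := one_mul _
  · have hne : ∀ᵐ t : ℝ, t ≠ Real.arcsin a := by
      simp [ae_iff]
    filter_upwards [hne] with t ht hmem
    rw [uIoc_of_le (by positivity)] at hmem
    have hs0 : 0 < Real.sin t := Real.sin_pos_of_pos_of_lt_pi hmem.1 (by linarith [hmem.2, Real.pi_pos])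
    have hplus : Tendsto (fun R => sinInt ((a + Real.sin t) * R)) atTop (𝓝 (π / 2)) :=
      tendsto_sinInt.comp (tendsto_id.const_mul_atTop (by linarith))
    have hsin : Real.sin (Real.arcsin a) = a := Real.sin_arcsin (by linarith) ha1.le
    rcases lt_or_gt_of_ne ht with h | h
    · have hlt : Real.sin t < a := by
        have := Real.sin_lt_sin_of_lt_of_le_pi_div_two (by linarith [hmem.1, Real.pi_pos]) hal1.le h
        rwa [hsin] at this
      have hminus : Tendsto (fun R => sinInt ((a - Real.sin t) * R)) atTop (𝓝 (π / 2)) :=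
        tendsto_sinInt.comp (tendsto_id.const_mul_atTop (by linarith))
      rw [indicator_of_mem (by exact h.le)]
      refine Tendsto.const_mul _ ?_
      have := (hplus.add hminus).div_const 2
      rwa [add_self_div_two] at this
    · have hlt : a < Real.sin t := by
        have := Real.sin_lt_sin_of_lt_of_le_pi_div_two (by linarith [Real.pi_pos]) hmem.2 h
        rwa [hsin] at this
      have hminus : Tendsto (fun R => sinInt ((a - Real.sin t) * R)) atTop (𝓝 (-(π / 2))) :=
        tendsto_sinInt_atBot.comp (tendsto_id.const_mul_atTop_of_neg (by linarith))
      rw [indicator_of_notMem (by simpa using h)]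
      have := ((hplus.add hminus).div_const 2).const_mul (Real.cos (p * t))
      simpa using this

theorem integral_sin_mul_besselJ_div_self (a : ℝ) (ha0 : 0 < a) (ha1 : a < 1) :
    (∀ p : ℤ, Even p → p ≠ 0 →
        ∫ x in Set.Ioi (0 : ℝ), Real.sin (a * x) * besselJ p x / x =
          (1 / (p : ℝ)) * Real.sin (p * Real.arcsin a)) ∧
      ∫ x in Set.Ioi (0 : ℝ), Real.sin (a * x) * besselJ 0 x / x = Real.arcsin a := by
  constructor
  · intro p hp hp0
    have hp' : (p:ℝ) ≠ 0 := by exact_mod_cast hp0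
    rw [main_integral a ha0 ha1 p hp, intervalIntegral.integral_comp_mul_left _ hp']
    simp
  · rw [main_integral a ha0 ha1 0 (by simp)]
    simp
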